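/- Let k ≥ 1 be an integer and let a < a' < b' < b. There exists a constant C > 0 such that every harmonic function φ on S_{a,b} (i.e. φ is C² there with Δ_{x,y}φ = 0) satisfying ‖φ‖_{H^k(S_{a,b})} < ∞ also satisfies ‖φ‖_{H^{k+1}(S_{a',b'})} ≤ C ‖φ‖_{H^k(S_{a,b})}. -/

import Mathlib

open MeasureTheory

/-- Horizontal partial derivative `∂_{x_j}` (functions on `ℝ^d × ℝ`). -/
noncomputable def dX {d : ℕ} (j : Fin d) (f : EuclideanSpace ℝ (Fin d) × ℝ → ℝ)
    (p : EuclideanSpace ℝ (Fin d) × ℝ) : ℝ :=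
  fderiv ℝ f p (EuclideanSpace.single j 1, 0)

/-- Vertical partial derivative `∂_y` (functions on `ℝ^d × ℝ`). -/
noncomputable def dY {d : ℕ} (f : EuclideanSpace ℝ (Fin d) × ℝ → ℝ)
    (p : EuclideanSpace ℝ (Fin d) × ℝ) : ℝ :=
  fderiv ℝ f p (0, 1)

/-- The `i`-th coordinate direction in `ℝ^d × ℝ`. -/
noncomputable def dir (d : ℕ) (i : Fin (d + 1)) : EuclideanSpace ℝ (Fin d) × ℝ :=
  Fin.lastCases ((0 : EuclideanSpace ℝ (Fin d)), (1 : ℝ))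
    (fun j => (EuclideanSpace.single j (1 : ℝ), (0 : ℝ))) i

/-- Squared Sobolev norm `‖φ‖²_{H^k(U)} = Σ_{|α| ≤ k} ∫_U |∂^α φ|²` (summed over ordered
words of coordinate directions of length at most `k`). -/
noncomputable def sobSq {d : ℕ} (k : ℕ) (φ : EuclideanSpace ℝ (Fin d) × ℝ → ℝ)
    (U : Set (EuclideanSpace ℝ (Fin d) × ℝ)) : ENNReal :=
  ∑ m ∈ Finset.range (k + 1), ∑ v : Fin m → Fin (d + 1),
    ∫⁻ p in U, ENNReal.ofReal ((iteratedFDeriv ℝ m φ p (fun i => dir d (v i))) ^ 2)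

open Metric Topology

abbrev VV (d : ℕ) := EuclideanSpace ℝ (Fin d) × ℝ

noncomputable def ipV {d : ℕ} (q v : VV d) : ℝ := inner ℝ q.1 v.1 + q.2 * v.2

structure IsMol {d : ℕ} (r : ℝ) (P ρ : VV d → ℝ) : Prop where
  sP : ContDiff ℝ (⊤ : ℕ∞) P
  sρ : ContDiff ℝ (⊤ : ℕ∞) ρ
  zP : ∀ q, r < ‖q‖ → P q = 0
  zρ : ∀ q, r < ‖q‖ → ρ q = 0
  one : ∫ q, ρ q = 1
  grad : ∀ q v, fderiv ℝ P q v = ρ q * ipV q v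

theorem cs_of_zero {d : ℕ} {r : ℝ} {f : VV d → ℝ} (h : ∀ q, r < ‖q‖ → f q = 0) :
    HasCompactSupport f := by
  apply HasCompactSupport.intro (isCompact_closedBall (0 : VV d) r)
  intro x hx
  apply h
  simpa using hx

theorem exists_mol (d : ℕ) {r : ℝ} (hr : 0 < r) : ∃ P ρ : VV d → ℝ, IsMol r P ρ := by
  set h : ℝ → ℝ := fun s => Real.smoothTransition (1 - s / r ^ 2) with hh
  have hsm : ContDiff ℝ (⊤ : ℕ∞) h := by
    apply Real.smoothTransition.contDiff.comp
    fun_prop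
  have hanti : Antitone h := by
    intro s t hst
    apply Real.smoothTransition.monotone
    gcongr
  have hd : Differentiable ℝ h := hsm.differentiable (by simp)
  have hd' : ContDiff ℝ (⊤ : ℕ∞) (deriv h) := by
    have : ContDiff ℝ ((⊤ : ℕ∞) + 1) h := by simpa using hsm
    exact (contDiff_succ_iff_deriv.1 this).2.2
  have hz : ∀ s, r ^ 2 < s → h s = 0 := by
    intro s hs
    apply Real.smoothTransition.zero_of_nonpos
    have : 1 ≤ s / r ^ 2 := by rw [le_div_iff₀ (by positivity)]; linarith
    linarith
  have hz' : ∀ s, r ^ 2 < s → deriv h s = 0 := by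
    intro s hs
    have : h =ᶠ[𝓝 s] fun _ => 0 := by
      filter_upwards [lt_mem_nhds hs] with t ht using hz t ht
    rw [this.deriv_eq]; simp
  have hneg : ∀ s, deriv h s ≤ 0 := fun s => hanti.deriv_nonpos
  obtain ⟨s, hs, hs'⟩ := exists_deriv_eq_slope h (show (0:ℝ) < r ^ 2 by positivity)
    hd.continuous.continuousOn hd.differentiableOn
  have hs'' : deriv h s ≠ 0 := by
    rw [hs']
    have h1 : h (r ^ 2) = 0 := by
      apply Real.smoothTransition.zero_of_nonpos
      rw [div_self (by positivity)]; simp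
    have h0 : h 0 = 1 := by simp [hh]
    rw [h1, h0]
    have : r ^ 2 ≠ 0 := by positivity
    simp [this]
  set Q : VV d → ℝ := fun q => ‖q.1‖ ^ 2 + q.2 ^ 2 with hQ
  have sQ : ContDiff ℝ (⊤ : ℕ∞) Q := by
    apply ContDiff.add
    · exact contDiff_fst.norm_sq ℝ
    · exact contDiff_snd.pow 2
  have Qbig : ∀ q, r < ‖q‖ → r ^ 2 < Q q := by
    intro q hq
    rw [Prod.norm_def, lt_max_iff] at hq
    simp only [hQ]
    rcases hq with hq | hq
    · nlinarith [sq_nonneg q.2]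
    · rw [Real.norm_eq_abs] at hq
      nlinarith [sq_nonneg ‖q.1‖, sq_abs q.2]
  have dQ : ∀ q v, fderiv ℝ Q q v = 2 * ipV q v := by
    intro q v
    have h1 : HasFDerivAt (fun q : VV d => ‖q.1‖ ^ 2) _ q :=
      (hasFDerivAt_fst (𝕜 := ℝ) (p := q)).norm_sq
    have h2 : HasFDerivAt (fun q : VV d => q.2 ^ 2) _ q :=
      (hasFDerivAt_snd (𝕜 := ℝ) (p := q)).pow 2
    have h3 : HasFDerivAt Q _ q := h1.add h2
    rw [h3.fderiv]
    simp [ipV]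
    ring
  set c := ∫ q : VV d, 2 * deriv h (Q q) with hc
  have cρ : Continuous fun q : VV d => 2 * deriv h (Q q) :=
    continuous_const.mul (hd'.continuous.comp sQ.continuous)
  have zρ0 : ∀ q : VV d, r < ‖q‖ → 2 * deriv h (Q q) = 0 := by
    intro q hq
    rw [hz' _ (Qbig q hq)]; simp
  have hc0 : c ≠ 0 := by
    have : 0 < ∫ q : VV d, -(2 * deriv h (Q q)) := by
      apply Continuous.integral_pos_of_hasCompactSupport_nonneg_nonzero (x := (0, √s)) cρ.neg
      · exact cs_of_zero (r := r) (fun q hq => by simp [hz' _ (Qbig q hq)])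
      · intro q
        have := hneg (Q q)
        change (0:ℝ) ≤ -(2 * deriv h (Q q))
        linarith
      · simp [hQ, Real.sq_sqrt hs.1.le, hs'']
    rw [integral_neg] at this
    intro h; rw [← hc, h] at this; simp at this
  refine ⟨fun q => c⁻¹ * h (Q q), fun q => c⁻¹ * (2 * deriv h (Q q)), ?_, ?_, ?_, ?_, ?_, ?_⟩
  · exact contDiff_const.mul (hsm.comp sQ)
  · exact contDiff_const.mul (contDiff_const.mul (hd'.comp sQ))
  · intro q hq; simp [hz _ (Qbig q hq)]
  · intro q hq; simp [hz' _ (Qbig q hq)]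
  · rw [integral_const_mul, ← hc]; exact inv_mul_cancel₀ hc0
  · intro q v
    have hQd : DifferentiableAt ℝ Q q := (sQ.differentiable (by simp)) q
    have h1 := ((hd (Q q)).hasDerivAt.comp_hasFDerivAt q hQd.hasFDerivAt).const_mul c⁻¹
    have : fderiv ℝ (fun q => c⁻¹ * h (Q q)) q = _ := h1.fderiv
    rw [this]
    simp [dQ]
    ring

noncomputable def lapV {d : ℕ} (g : VV d → ℝ) (z : VV d) : ℝ :=
  ∑ i, fderiv ℝ (fun z => fderiv ℝ g z (dir d i)) z (dir d i)

theorem haarV (d : ℕ) : (volume : Measure (VV d)).IsAddHaarMeasure :=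
  inferInstanceAs ((volume : Measure (EuclideanSpace ℝ (Fin d))).prod
    (volume : Measure ℝ)).IsAddHaarMeasure

theorem sum_dir {d : ℕ} (q : VV d) : q = ∑ i, ipV q (dir d i) • dir d i := by
  rw [Fin.sum_univ_castSucc]
  simp only [dir, Fin.lastCases_castSucc, Fin.lastCases_last, ipV]
  ext j
  · simp [Prod.fst_sum, EuclideanSpace.inner_single_right]
    simp [Pi.single_apply]
  · simp [Prod.snd_sum]

theorem lap_eq {d : ℕ} (φ : VV d → ℝ) (p : VV d) :
    lapV φ p = (∑ j, dX j (dX j φ) p) + dY (dY φ) p := by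
  unfold lapV
  rw [Fin.sum_univ_castSucc]
  simp only [dir, Fin.lastCases_castSucc, Fin.lastCases_last]
  rfl

theorem mean_value_global {d : ℕ} {r R : ℝ} {P ρ : VV d → ℝ} (hm : IsMol r P ρ)
    (hr : r < R) (g : VV d → ℝ) (hg : ContDiff ℝ 2 g) (hc : HasCompactSupport g)
    (p : VV d) (hl : ∀ z ∈ ball p R, lapV g z = 0) :
    g p = ∫ q, ρ q * g (p - q) := by
  have := haarV d
  have cρ := hm.sρ.continuous
  have sρ : HasCompactSupport ρ := cs_of_zero hm.zρ
  have cP := hm.sP.continuous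
  have sP : HasCompactSupport P := cs_of_zero hm.zP
  have dg : Differentiable ℝ g := hg.differentiable (by simp)
  have cg' : Continuous (fderiv ℝ g) := hg.continuous_fderiv (by simp)
  have sg' : ∀ i, ContDiff ℝ 1 (fun z => fderiv ℝ g z (dir d i)) := fun i => by
    have : ContDiff ℝ 1 (fderiv ℝ g) := hg.fderiv_right (by norm_num)
    exact this.clm_apply contDiff_const
  obtain ⟨C, hC⟩ := cg'.bounded_above_of_compact_support (hc.fderiv ℝ)
  set F : ℝ → ℝ := fun t => ∫ q, ρ q * g (p - t • q) with hF
  have hcont : ∀ t : ℝ, Continuous fun q => ρ q * g (p - t • q) := by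
    intro t
    have := hg.continuous
    fun_prop
  have hcont' : ∀ t : ℝ, Continuous fun q => ρ q * fderiv ℝ g (p - t • q) (-q) := by
    intro t
    apply cρ.mul
    apply Continuous.clm_apply
    · exact cg'.comp (by fun_prop)
    · fun_prop
  have hder : ∀ t, HasDerivAt F (∫ q, ρ q * fderiv ℝ g (p - t • q) (-q)) t := by
    intro t
    refine (hasDerivAt_integral_of_dominated_loc_of_deriv_le (s := Set.univ)
      (bound := fun q => |ρ q| * (C * ‖q‖))
      (F' := fun t q => ρ q * fderiv ℝ g (p - t • q) (-q)) Filter.univ_mem ?_ ?_ ?_ ?_ ?_ ?_).2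
    · exact Filter.Eventually.of_forall fun t => (hcont t).aestronglyMeasurable
    · exact (hcont t).integrable_of_hasCompactSupport sρ.mul_right
    · exact (hcont' t).aestronglyMeasurable
    · refine Filter.Eventually.of_forall fun q t _ => ?_
      rw [norm_mul, Real.norm_eq_abs]
      gcongr
      refine (ContinuousLinearMap.le_opNorm _ _).trans ?_
      rw [norm_neg]
      gcongr
      exact hC _
    · apply Continuous.integrable_of_hasCompactSupport
      · fun_prop
      · exact HasCompactSupport.mul_right sρ.norm
    · refine Filter.Eventually.of_forall fun q t _ => ?_
      have h1 : HasDerivAt (fun t : ℝ => p - t • q) (-q) t := by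
        simpa using ((hasDerivAt_id t).smul_const q).const_sub p
      exact ((dg _).hasFDerivAt.comp_hasDerivAt t h1).const_mul _
  have hzero : ∀ t ∈ Set.Icc (0:ℝ) 1, (∫ q, ρ q * fderiv ℝ g (p - t • q) (-q)) = 0 := by
    intro t ht
    have e1 : ∀ q, ρ q * fderiv ℝ g (p - t • q) (-q)
        = - ∑ i, fderiv ℝ P q (dir d i) * fderiv ℝ g (p - t • q) (dir d i) := by
      intro q
      rw [map_neg]
      conv_lhs => rw [sum_dir q]
      rw [map_sum, mul_neg, Finset.mul_sum]
      simp_rw [← sum_dir q, hm.grad, map_smul, smul_eq_mul, mul_assoc]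
    have hin : ∀ i, Continuous fun q => fderiv ℝ g (p - t • q) (dir d i) := fun i =>
      (sg' i).continuous.comp (by fun_prop)
    have cP' : ∀ i, Continuous fun q => fderiv ℝ P q (dir d i) := fun i =>
      (hm.sP.continuous_fderiv (by simp)).clm_apply continuous_const
    have sP' : ∀ i, HasCompactSupport fun q => fderiv ℝ P q (dir d i) := fun i =>
      sP.fderiv_apply ℝ (dir d i)
    have hd2 : ∀ i q, HasFDerivAt (fun q => fderiv ℝ g (p - t • q) (dir d i))
        (-(t • fderiv ℝ (fun z => fderiv ℝ g z (dir d i)) (p - t • q))) q := by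
      intro i q
      have h1 : HasFDerivAt (fun q : VV d => p - t • q) (-(t • ContinuousLinearMap.id ℝ (VV d))) q :=
        ((hasFDerivAt_id q).const_smul t).const_sub p
      have h2 := (((sg' i).differentiable (by simp)) (p - t • q)).hasFDerivAt
      have h3 := h2.comp q h1
      refine h3.congr_fderiv ?_
      ext v <;> simp
    have e2 : ∀ i, ∫ q, fderiv ℝ P q (dir d i) * fderiv ℝ g (p - t • q) (dir d i)
        = ∫ q, t * (P q * fderiv ℝ (fun z => fderiv ℝ g z (dir d i)) (p - t • q) (dir d i)) := by
      intro i
      have h2c : Continuous fun q => 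
          fderiv ℝ (fun z => fderiv ℝ g z (dir d i)) (p - t • q) (dir d i) := by
        refine Continuous.clm_apply ?_ continuous_const
        exact ((sg' i).continuous_fderiv (by simp)).comp (by fun_prop)
      have := integral_mul_fderiv_eq_neg_fderiv_mul_of_integrable (μ := (volume : Measure (VV d)))
        (f := P) (g := fun q => fderiv ℝ g (p - t • q) (dir d i)) (v := dir d i)
        (((cP' i).mul (hin i)).integrable_of_hasCompactSupport (sP' i).mul_right)
        (by
          simp_rw [(hd2 i _).fderiv]
          apply Continuous.integrable_of_hasCompactSupport _ sP.mul_right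
          simp
          fun_prop)
        ((cP.mul (hin i)).integrable_of_hasCompactSupport sP.mul_right)
        (fun x _ => (hm.sP.differentiable (by simp)) x)
        (fun x _ => (hd2 i x).differentiableAt)
      rw [eq_comm, neg_eq_iff_eq_neg] at this
      rw [this, ← integral_neg]
      congr 1; ext q
      rw [(hd2 i q).fderiv]
      simp
      ring
    have e3 : ∀ q, ∑ i, t * (P q * fderiv ℝ (fun z => fderiv ℝ g z (dir d i)) (p - t • q) (dir d i)) = 0 := by
      intro q
      rw [← Finset.mul_sum, ← Finset.mul_sum]
      by_cases hq : r < ‖q‖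
      · simp [hm.zP q hq]
      · have := hl (p - t • q) (by
          rw [mem_ball, dist_eq_norm]
          simp only [sub_sub_cancel_left, norm_neg, norm_smul, Real.norm_eq_abs, abs_of_nonneg ht.1]
          nlinarith [norm_nonneg q, ht.2])
        unfold lapV at this
        rw [this]; simp
    simp_rw [e1]
    rw [integral_neg, integral_finsetSum]
    · simp_rw [e2]
      rw [← integral_finsetSum]
      · simp [e3]
      · intro i _
        apply Continuous.integrable_of_hasCompactSupport
        · refine continuous_const.mul (cP.mul (Continuous.clm_apply ?_ continuous_const))
          exact ((sg' i).continuous_fderiv (by simp)).comp (by fun_prop)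
        · exact HasCompactSupport.mul_left (HasCompactSupport.mul_right sP)
    · intro i _
      exact ((cP' i).mul (hin i)).integrable_of_hasCompactSupport (sP' i).mul_right
  have := constant_of_has_deriv_right_zero (f := F) (a := 0) (b := 1)
    (fun t _ => (hder t).continuousAt.continuousWithinAt)
    (fun t ht => by
      have := (hder t).hasDerivWithinAt (s := Set.Ici t)
      rwa [hzero t ⟨ht.1, ht.2.le⟩] at this) 1 (by simp)
  simp only [hF, one_smul, zero_smul, sub_zero, integral_mul_const, hm.one, one_mul] at this
  exact this.symm

theorem localize {d : ℕ} {S : Set (VV d)} (hS : IsOpen S) {n : ℕ∞} {g : VV d → ℝ}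
    (hg : ContDiffOn ℝ n g S) {p : VV d} {r : ℝ} (hr : 0 < r) (hb : closedBall p r ⊆ S) :
    ∃ ε > 0, ball p (r + ε) ⊆ S ∧ ∃ G : VV d → ℝ, ContDiff ℝ n G ∧ HasCompactSupport G ∧
      ∀ z ∈ ball p (r + ε), G z = g z := by
  obtain ⟨δ, hδ, hδS⟩ := (isCompact_closedBall p r).exists_thickening_subset_open hS hb
  rw [thickening_closedBall hδ hr.le] at hδS
  let χ : ContDiffBump p := ⟨r + δ / 3, r + δ / 2, by positivity, by linarith⟩
  refine ⟨δ / 3, by positivity, (ball_subset_ball (by linarith)).trans hδS,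
    fun z => χ z * g z, ?_, ?_, ?_⟩
  · rw [contDiff_iff_contDiffAt]
    intro x
    by_cases hx : x ∈ S
    · exact χ.contDiffAt.mul (hg.contDiffAt (hS.mem_nhds hx))
    · have hx' : x ∉ tsupport χ := by
        rw [χ.tsupport_eq]
        intro h
        apply hx
        apply hδS
        have : dist x p ≤ r + δ / 2 := h
        rw [mem_ball]
        linarith
      have : (fun z => χ z * g z) =ᶠ[𝓝 x] fun _ => 0 := by
        filter_upwards [notMem_tsupport_iff_eventuallyEq.1 hx'] with z hz
        rw [hz]; simp
      exact contDiffAt_const.congr_of_eventuallyEq this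
  · exact χ.hasCompactSupport.mul_right
  · intro z hz
    have : χ z = 1 := χ.one_of_mem_closedBall (ball_subset_closedBall hz)
    simp [this]

theorem conv_congr {d : ℕ} {r : ℝ} {w G g : VV d → ℝ} (hw : ∀ q, r < ‖q‖ → w q = 0) {p : VV d}
    (h : ∀ z ∈ closedBall p r, G z = g z) :
    ∫ q, w q * G (p - q) = ∫ q, w q * g (p - q) := by
  congr 1; ext q
  by_cases hq : r < ‖q‖
  · simp [hw q hq]
  · rw [h]
    rw [mem_closedBall, dist_eq_norm]
    simpa using hq

def MV {d : ℕ} (r : ℝ) (ρ : VV d → ℝ) (S : Set (VV d)) (g : VV d → ℝ) : Prop :=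
  ∀ p, closedBall p r ⊆ S → g p = ∫ q, ρ q * g (p - q)

theorem mv_of_harmonic {d : ℕ} {r : ℝ} (hr : 0 < r) {P ρ : VV d → ℝ} (hm : IsMol r P ρ)
    {S : Set (VV d)} (hS : IsOpen S) {g : VV d → ℝ} (hg : ContDiffOn ℝ 2 g S)
    (hl : ∀ z ∈ S, lapV g z = 0) : MV r ρ S g := by
  intro p hp
  obtain ⟨ε, hε, hεS, G, hG, hGc, hGe⟩ := localize hS (n := 2) hg hr hp
  have h1 : closedBall p r ⊆ ball p (r + ε) := closedBall_subset_ball (by linarith)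
  rw [← conv_congr hm.zρ (fun z hz => hGe z (h1 hz)), ← hGe p (h1 (mem_closedBall_self hr.le))]
  refine mean_value_global hm (R := r + ε) (by linarith) G hG hGc p ?_
  intro z hz
  rw [← hl z (hεS hz)]
  have e1 : ∀ y ∈ ball p (r + ε), G =ᶠ[𝓝 y] g := fun y hy => by
    filter_upwards [isOpen_ball.mem_nhds hy] with u hu using hGe u hu
  unfold lapV
  refine Finset.sum_congr rfl fun i _ => ?_
  have e2 : (fun z => fderiv ℝ G z (dir d i)) =ᶠ[𝓝 z] (fun z => fderiv ℝ g z (dir d i)) := by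
    filter_upwards [isOpen_ball.mem_nhds hz] with u hu
    rw [(e1 u hu).fderiv_eq]
  rw [e2.fderiv_eq]

theorem smooth_of_harmonic {d : ℕ} {S : Set (VV d)} (hS : IsOpen S) {g : VV d → ℝ}
    (hg : ContDiffOn ℝ 2 g S) (hl : ∀ z ∈ S, lapV g z = 0) :
    ContDiffOn ℝ (⊤ : ℕ∞) g S := by
  have := haarV d
  intro p hp
  apply ContDiffAt.contDiffWithinAt
  obtain ⟨δ, hδ, hδS⟩ := Metric.isOpen_iff.1 hS p hp
  set r := δ / 3
  have hr : 0 < r := by positivity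
  obtain ⟨P, ρ, hm⟩ := exists_mol d hr
  have hb : closedBall p (2 * r) ⊆ S := (closedBall_subset_ball (by simp only [r]; linarith)).trans hδS
  obtain ⟨ε, hε, hεS, G, hG, hGc, hGe⟩ := localize hS (n := 2) hg (by positivity) hb
  have hmv := mv_of_harmonic hr hm hS hg hl
  have hc : ContDiff ℝ (⊤ : ℕ∞)
      (convolution ρ G (ContinuousLinearMap.mul ℝ ℝ) (volume : Measure (VV d))) :=
    (cs_of_zero hm.zρ).contDiff_convolution_left _ hm.sρ hG.continuous.locallyIntegrable
  refine hc.contDiffAt.congr_of_eventuallyEq ?_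
  filter_upwards [ball_mem_nhds p hr] with z hz
  have h1 : closedBall z r ⊆ closedBall p (2 * r) := by
    apply closedBall_subset_closedBall'
    have := mem_ball.1 hz
    linarith
  rw [hmv z (h1.trans hb), ← conv_congr hm.zρ (fun u hu =>
    hGe u (closedBall_subset_ball (by linarith) (h1 hu)))]
  rfl

theorem deriv_mv {d : ℕ} {r : ℝ} (hr : 0 < r) {P ρ : VV d → ℝ} (hm : IsMol r P ρ)
    {S : Set (VV d)} (hS : IsOpen S) {g : VV d → ℝ} (hg : ContDiffOn ℝ (⊤ : ℕ∞) g S)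
    (hmv : MV r ρ S g) (w : VV d) (p : VV d) (hp : closedBall p r ⊆ S) :
    fderiv ℝ g p w = ∫ q, ρ q * fderiv ℝ g (p - q) w ∧
    fderiv ℝ g p w = ∫ q, fderiv ℝ ρ q w * g (p - q) := by
  have := haarV d
  obtain ⟨ε, hε, hεS, G, hG, hGc, hGe⟩ := localize hS hg hr hp
  have sρ := cs_of_zero hm.zρ
  have h0 : closedBall p r ⊆ ball p (r + ε) := closedBall_subset_ball (by linarith)
  have e0 : g =ᶠ[𝓝 p] fun z => ∫ q, ρ q * G (z - q) := by
    filter_upwards [ball_mem_nhds p hε] with z hz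
    have h1 : closedBall z r ⊆ ball p (r + ε) := by
      apply closedBall_subset_ball'
      have := mem_ball.1 hz
      linarith
    rw [hmv z (h1.trans hεS), ← conv_congr hm.zρ (fun u hu => hGe u (h1 hu))]
  have e1 : g =ᶠ[𝓝 p] convolution ρ G (ContinuousLinearMap.mul ℝ ℝ) (volume : Measure (VV d)) := e0
  have e2 : g =ᶠ[𝓝 p] convolution G ρ (ContinuousLinearMap.mul ℝ ℝ) (volume : Measure (VV d)) := by
    filter_upwards [e0] with z hz
    rw [hz, ← integral_sub_left_eq_self _ volume z]
    simp [convolution, mul_comm]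
  have G1 : ContDiff ℝ 1 G := hG.of_le (by simp)
  have ρ1 : ContDiff ℝ 1 ρ := hm.sρ.of_le (by simp)
  constructor
  · rw [e1.fderiv_eq, (hGc.hasFDerivAt_convolution_right (ContinuousLinearMap.mul ℝ ℝ)
      hm.sρ.continuous.locallyIntegrable G1 p).fderiv,
      convolution_precompR_apply _ hm.sρ.continuous.locallyIntegrable (hGc.fderiv ℝ)
        (G1.continuous_fderiv (by simp))]
    refine conv_congr (G := fun z => fderiv ℝ G z w) (g := fun z => fderiv ℝ g z w) hm.zρ ?_
    intro z hz
    have : G =ᶠ[𝓝 z] g := by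
      filter_upwards [isOpen_ball.mem_nhds (h0 hz)] with u hu using hGe u hu
    simp only [this.fderiv_eq]
  · rw [e2.fderiv_eq, (sρ.hasFDerivAt_convolution_right (ContinuousLinearMap.mul ℝ ℝ)
      hG.continuous.locallyIntegrable ρ1 p).fderiv,
      convolution_precompR_apply _ hG.continuous.locallyIntegrable (sρ.fderiv ℝ)
        (ρ1.continuous_fderiv (by simp))]
    rw [convolution, ← integral_sub_left_eq_self _ volume p]
    simp only [ContinuousLinearMap.mul_apply', sub_sub_cancel]
    simp_rw [mul_comm (G _)]
    refine conv_congr (w := fun q => fderiv ℝ ρ q w) (fun q hq => ?_) (fun z hz => hGe z (h0 hz))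
    have : ρ =ᶠ[𝓝 q] fun _ => 0 := by
      filter_upwards [(continuous_norm.isOpen_preimage _ isOpen_Ioi).mem_nhds hq] with u hu
        using hm.zρ u hu
    simp [this.fderiv_eq]

theorem iter_mv {d : ℕ} {r : ℝ} (hr : 0 < r) {P ρ : VV d → ℝ} (hm : IsMol r P ρ)
    {S : Set (VV d)} (hS : IsOpen S) {g : VV d → ℝ} (hg : ContDiffOn ℝ (⊤ : ℕ∞) g S)
    (hmv : MV r ρ S g) : ∀ (k : ℕ) (v : Fin k → VV d),
    MV r ρ S (fun z => iteratedFDeriv ℝ k g z v) := by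
  have hsm : ∀ (k : ℕ), ContDiffOn ℝ (⊤ : ℕ∞) (fun z => iteratedFDeriv ℝ k g z) S := fun k x hx =>
    ((hg.contDiffAt (hS.mem_nhds hx)).iteratedFDeriv_right (m := (⊤ : ℕ∞)) (i := k)
      (by norm_cast)).contDiffWithinAt
  have hsv : ∀ (k : ℕ) (v : Fin k → VV d),
      ContDiffOn ℝ (⊤ : ℕ∞) (fun z => iteratedFDeriv ℝ k g z v) S := fun k v =>
    (ContinuousMultilinearMap.apply ℝ (fun _ : Fin k => VV d) ℝ v).contDiff.comp_contDiffOn (hsm k)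
  intro k
  induction k with
  | zero => intro v; simpa using hmv
  | succ k ih =>
    intro v p hp
    have key : ∀ z ∈ S, iteratedFDeriv ℝ (k + 1) g z v
        = fderiv ℝ (fun y => iteratedFDeriv ℝ k g y (Fin.tail v)) z (v 0) := fun z hz =>
      DifferentiableAt.iteratedFDeriv_succ_apply_left'
        (((hsm k).contDiffAt (hS.mem_nhds hz)).differentiableAt (by simp))
    have := (deriv_mv hr hm hS (hsv k (Fin.tail v)) (ih (Fin.tail v)) (v 0) p hp).1
    simp only
    rw [key p (hp (mem_closedBall_self hr.le)), this]
    exact conv_congr (G := fun z => fderiv ℝ (fun y => iteratedFDeriv ℝ k g y (Fin.tail v)) z (v 0))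
      (g := fun z => iteratedFDeriv ℝ (k+1) g z v) hm.zρ (fun z hz => (key z (hp hz)).symm)

theorem ofReal_sq_enorm (x : ℝ) : ENNReal.ofReal (x ^ 2) = ‖x‖ₑ ^ 2 := by
  rw [Real.enorm_eq_ofReal_abs, ← ENNReal.ofReal_pow (abs_nonneg x), sq_abs]

theorem cs_sq {α : Type*} [MeasurableSpace α] (μ : Measure α) (f g : α → ENNReal)
    (hf : AEMeasurable f μ) (hg : AEMeasurable g μ) :
    (∫⁻ x, f x * g x ∂μ) ^ 2 ≤ (∫⁻ x, f x ^ 2 ∂μ) * ∫⁻ x, g x ^ 2 ∂μ := by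
  have h := ENNReal.lintegral_mul_le_Lp_mul_Lq μ Real.HolderConjugate.two_two hf hg
  simp only [Pi.mul_apply, ENNReal.rpow_ofNat] at h
  calc _ ≤ _ := pow_le_pow_left' h 2
    _ = _ := by
      rw [mul_pow, ← ENNReal.rpow_natCast, ← ENNReal.rpow_natCast, ← ENNReal.rpow_mul,
        ← ENNReal.rpow_mul]
      norm_num

theorem l2_est {d : ℕ} {r : ℝ} {w g f : VV d → ℝ} (hw : Continuous w)
    (hw0 : ∀ q, r < ‖q‖ → w q = 0) {S S' : Set (VV d)} (hS : IsOpen S) (hS' : IsOpen S')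
    (hg : ContinuousOn g S) (hb : ∀ p ∈ S', closedBall p r ⊆ S)
    (hf : ∀ p ∈ S', f p = ∫ q, w q * g (p - q)) :
    ∫⁻ p in S', ENNReal.ofReal (f p ^ 2) ≤
      ((∫⁻ q, ‖w q‖ₑ ^ 2) * volume (closedBall (0 : VV d) r)) *
        ∫⁻ p in S, ENNReal.ofReal (g p ^ 2) := by
  have := haarV d
  simp_rw [ofReal_sq_enorm]
  set B := closedBall (0 : VV d) r with hB
  set Γ : VV d → ENNReal := S.indicator (fun z => ‖g z‖ₑ) with hΓ
  have mΓ : Measurable Γ := by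
    have h1 : Measurable (S.indicator g) := by
      classical
      rw [← Set.piecewise_eq_indicator]
      exact hg.measurable_piecewise continuousOn_const hS.measurableSet
    have : Γ = fun z => ‖S.indicator g z‖ₑ := by
      ext z; by_cases hz : z ∈ S <;> simp [hΓ, hz]
    rw [this]; exact h1.enorm
  have mw : Measurable fun q => ‖w q‖ₑ := hw.measurable.enorm
  have mB : MeasurableSet B := isClosed_closedBall.measurableSet
  have pt : ∀ p ∈ S', ‖f p‖ₑ ^ 2 ≤ (∫⁻ q, ‖w q‖ₑ ^ 2) * ∫⁻ q in B, Γ (p - q) ^ 2 := by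
    intro p hp
    have h1 : ‖f p‖ₑ ≤ ∫⁻ q, ‖w q‖ₑ * B.indicator (fun q => Γ (p - q)) q := by
      rw [hf p hp]
      refine (enorm_integral_le_lintegral_enorm _).trans (lintegral_mono fun q => ?_)
      by_cases hq : r < ‖q‖
      · simp [hw0 q hq]
      · have hqB : q ∈ B := by simpa [hB] using hq
        have : p - q ∈ S := hb p hp (by
          rw [mem_closedBall, dist_eq_norm]
          simpa using hq)
        simp [hqB, hΓ, this, enorm_mul]
    refine (pow_le_pow_left' h1 2).trans ((cs_sq _ _ _ mw.aemeasurable ?_).trans ?_)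
    · exact ((mΓ.comp (by fun_prop)).indicator mB).aemeasurable
    · rw [← lintegral_indicator mB]
      refine mul_le_mul_right (lintegral_mono ?_) _
      intro q
      by_cases hq : q ∈ B <;> simp [hq]
  calc ∫⁻ p in S', ‖f p‖ₑ ^ 2
      ≤ ∫⁻ p in S', (∫⁻ q, ‖w q‖ₑ ^ 2) * ∫⁻ q in B, Γ (p - q) ^ 2 :=
        setLIntegral_mono' hS'.measurableSet pt
    _ ≤ ∫⁻ p, (∫⁻ q, ‖w q‖ₑ ^ 2) * ∫⁻ q in B, Γ (p - q) ^ 2 := setLIntegral_le_lintegral _ _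
    _ = (∫⁻ q, ‖w q‖ₑ ^ 2) * ∫⁻ p, ∫⁻ q in B, Γ (p - q) ^ 2 := by
        apply lintegral_const_mul
        apply Measurable.lintegral_prod_right' (f := fun x : VV d × VV d => Γ (x.1 - x.2) ^ 2)
        exact (mΓ.comp (by fun_prop)).pow_const 2
    _ = (∫⁻ q, ‖w q‖ₑ ^ 2) * ∫⁻ q in B, ∫⁻ p, Γ (p - q) ^ 2 := by
        rw [lintegral_lintegral_swap]
        exact ((mΓ.comp (by fun_prop : Measurable fun x : VV d × VV d => x.1 - x.2)).pow_const
          2).aemeasurable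
    _ = (∫⁻ q, ‖w q‖ₑ ^ 2) * ∫⁻ q in B, ∫⁻ p in S, ‖g p‖ₑ ^ 2 := by
        congr 2; ext q
        rw [lintegral_sub_right_eq_self (fun p => Γ p ^ 2), ← lintegral_indicator hS.measurableSet]
        congr 1; ext p
        by_cases hp : p ∈ S <;> simp [hΓ, hp]
    _ = _ := by
        rw [setLIntegral_const]; ring

theorem l2_const {d : ℕ} {r : ℝ} {w : VV d → ℝ} (hw : Continuous w)
    (hw0 : ∀ q, r < ‖q‖ → w q = 0) :
    (∫⁻ q, ‖w q‖ₑ ^ 2) * volume (closedBall (0 : VV d) r) < ⊤ := by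
  have := haarV d
  apply ENNReal.mul_lt_top
  · have h : MemLp w 2 (volume : Measure (VV d)) := hw.memLp_of_hasCompactSupport (cs_of_zero hw0)
    have := lintegral_rpow_enorm_lt_top_of_eLpNorm_lt_top (by simp) (by simp) h.2
    simpa using this
  · exact measure_closedBall_lt_top

theorem strip_ball {d : ℕ} {η : EuclideanSpace ℝ (Fin d) → ℝ}
    (hsm : ContDiff ℝ (⊤ : ℕ∞) η) (hbd : ∃ C : ℝ, ∀ x, ‖iteratedFDeriv ℝ 1 η x‖ ≤ C)
    {a b a' b' : ℝ} (h₁ : a < a') (h₃ : b' < b) :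
    ∃ r > 0, ∀ p ∈ {p : VV d | a' < p.2 - η p.1 ∧ p.2 - η p.1 < b'},
      closedBall p r ⊆ {p : VV d | a < p.2 - η p.1 ∧ p.2 - η p.1 < b} := by
  obtain ⟨C, hC⟩ := hbd
  have hC0 : 0 ≤ C := (norm_nonneg _).trans (hC 0)
  set m := min (a' - a) (b - b') with hm
  have hm0 : 0 < m := by simp [hm]; constructor <;> linarith
  have hma : m ≤ a' - a := min_le_left _ _
  have hmb : m ≤ b - b' := min_le_right _ _
  refine ⟨m / (1 + C), by positivity, ?_⟩
  rintro p ⟨hp1, hp2⟩ z hz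
  have hz' : ‖z - p‖ ≤ m / (1 + C) := by simpa [dist_eq_norm] using hz
  have hx : ‖z.1 - p.1‖ ≤ m / (1 + C) := (norm_fst_le (z - p)).trans hz'
  have hy : |z.2 - p.2| ≤ m / (1 + C) := (norm_snd_le (z - p)).trans hz'
  have hη : |η z.1 - η p.1| ≤ C * ‖z.1 - p.1‖ := by
    refine Convex.norm_image_sub_le_of_norm_fderiv_le (𝕜 := ℝ) (s := Set.univ)
      (fun x _ => (hsm.differentiable (by simp)) x) (fun x _ => ?_) convex_univ trivial trivial
    rw [← norm_iteratedFDeriv_one]; exact hC x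
  have hη' : |η z.1 - η p.1| ≤ C * (m / (1 + C)) := hη.trans (by gcongr)
  have hs : m / (1 + C) + C * (m / (1 + C)) = m := by field_simp
  rw [abs_le] at hy hη'
  constructor <;> linarith

theorem elliptic_regularity_strip
    (d : ℕ) (hd : 1 ≤ d)
    (η₁ : EuclideanSpace ℝ (Fin d) → ℝ)
    (hsm : ContDiff ℝ (⊤ : ℕ∞) η₁)
    (hbd : ∀ n : ℕ, ∃ C : ℝ, ∀ x, ‖iteratedFDeriv ℝ n η₁ x‖ ≤ C)
    (a b a' b' : ℝ) (h₁ : a < a') (h₂ : a' < b') (h₃ : b' < b)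
    (k : ℕ) (hk : 1 ≤ k) :
    ∃ C > (0 : ℝ), ∀ φ : EuclideanSpace ℝ (Fin d) × ℝ → ℝ,
      ContDiffOn ℝ 2 φ {p : EuclideanSpace ℝ (Fin d) × ℝ |
        a < p.2 - η₁ p.1 ∧ p.2 - η₁ p.1 < b} →
      (∀ p ∈ {p : EuclideanSpace ℝ (Fin d) × ℝ | a < p.2 - η₁ p.1 ∧ p.2 - η₁ p.1 < b},
        (∑ j, dX j (dX j φ) p) + dY (dY φ) p = 0) →
      sobSq k φ {p : EuclideanSpace ℝ (Fin d) × ℝ | a < p.2 - η₁ p.1 ∧ p.2 - η₁ p.1 < b} < ⊤ →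
      sobSq (k + 1) φ {p : EuclideanSpace ℝ (Fin d) × ℝ |
          a' < p.2 - η₁ p.1 ∧ p.2 - η₁ p.1 < b'}
        ≤ ENNReal.ofReal (C ^ 2) *
            sobSq k φ {p : EuclideanSpace ℝ (Fin d) × ℝ |
              a < p.2 - η₁ p.1 ∧ p.2 - η₁ p.1 < b} := by
  obtain ⟨r, hr, hball⟩ := strip_ball hsm (hbd 1) h₁ h₃
  obtain ⟨P, ρ, hm⟩ := exists_mol d hr
  have hop : ∀ a b : ℝ, IsOpen {p : VV d | a < p.2 - η₁ p.1 ∧ p.2 - η₁ p.1 < b} := by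
    intro a b
    have := hsm.continuous
    have hc : Continuous fun p : VV d => p.2 - η₁ p.1 := by fun_prop
    exact (isOpen_lt continuous_const hc).inter (isOpen_lt hc continuous_const)
  have hS := hop a b
  have hS' := hop a' b'
  set S := {p : VV d | a < p.2 - η₁ p.1 ∧ p.2 - η₁ p.1 < b}
  set S' := {p : VV d | a' < p.2 - η₁ p.1 ∧ p.2 - η₁ p.1 < b'}
  set W : Fin (d + 1) → VV d → ℝ := fun i q => fderiv ℝ ρ q (dir d i) with hW
  have cW : ∀ i, Continuous (W i) := fun i =>
    (hm.sρ.continuous_fderiv (by simp)).clm_apply continuous_const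
  have zW : ∀ i q, r < ‖q‖ → W i q = 0 := by
    intro i q hq
    have : ρ =ᶠ[𝓝 q] fun _ => 0 := by
      filter_upwards [(continuous_norm.isOpen_preimage _ isOpen_Ioi).mem_nhds hq] with u hu
        using hm.zρ u hu
    simp [hW, this.fderiv_eq]
  set K : Fin (d + 1) → ENNReal := fun i =>
    (∫⁻ q, ‖W i q‖ₑ ^ 2) * volume (closedBall (0 : VV d) r) with hK
  have hKt : ∀ i, K i < ⊤ := fun i => l2_const (cW i) (zW i)
  set T : ENNReal := ∑ v : Fin (k + 1) → Fin (d + 1), K (v 0) with hT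
  have hTt : T ≠ ⊤ := (ENNReal.sum_lt_top.2 fun v _ => hKt _).ne
  refine ⟨1 + T.toReal, by positivity, ?_⟩
  intro φ hφ hlap _
  have hl : ∀ z ∈ S, lapV φ z = 0 := fun z hz => by rw [lap_eq]; exact hlap z hz
  have hss : S' ⊆ S := fun p hp => hball p hp (mem_closedBall_self hr.le)
  have hφs := smooth_of_harmonic hS hφ hl
  have hmv := mv_of_harmonic hr hm hS hφ hl
  have hsm' : ContDiffOn ℝ (⊤ : ℕ∞) (fun z => iteratedFDeriv ℝ k φ z) S := fun x hx =>
    ((hφs.contDiffAt (hS.mem_nhds hx)).iteratedFDeriv_right (m := (⊤ : ℕ∞)) (i := k)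
      (by norm_cast)).contDiffWithinAt
  have hsv : ∀ (v : Fin k → VV d),
      ContDiffOn ℝ (⊤ : ℕ∞) (fun z => iteratedFDeriv ℝ k φ z v) S := fun v =>
    (ContinuousMultilinearMap.apply ℝ (fun _ : Fin k => VV d) ℝ v).contDiff.comp_contDiffOn hsm'
  have main : sobSq (k + 1) φ S' ≤ (1 + T) * sobSq k φ S := by
    have hsplit : sobSq (k + 1) φ S' = sobSq k φ S' + ∑ v : Fin (k + 1) → Fin (d + 1),
        ∫⁻ p in S', ENNReal.ofReal
          ((iteratedFDeriv ℝ (k + 1) φ p (fun i => dir d (v i))) ^ 2) := by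
      unfold sobSq
      rw [Finset.sum_range_succ _ (k + 1)]
    rw [hsplit, add_mul, one_mul]
    gcongr
    · unfold sobSq
      gcongr
    · rw [hT, Finset.sum_mul]
      refine Finset.sum_le_sum fun v _ => ?_
      have est := l2_est (cW (v 0)) (zW (v 0)) hS hS'
        (g := fun z => iteratedFDeriv ℝ k φ z (fun i => dir d (Fin.tail v i)))
        (f := fun p => iteratedFDeriv ℝ (k + 1) φ p (fun i => dir d (v i)))
        (hsv _).continuousOn hball (by
          intro p hp
          have := (deriv_mv hr hm hS (hsv (fun i => dir d (Fin.tail v i)))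
            (iter_mv hr hm hS hφs hmv k _) (dir d (v 0)) p (hball p hp)).2
          rw [← this]
          exact DifferentiableAt.iteratedFDeriv_succ_apply_left'
            ((hsm'.contDiffAt (hS.mem_nhds (hss hp))).differentiableAt (by simp)))
      refine est.trans ?_
      gcongr
      unfold sobSq
      refine le_trans ?_ (Finset.single_le_sum (f := fun m => ∑ v : Fin m → Fin (d + 1),
        ∫⁻ p in S, ENNReal.ofReal ((iteratedFDeriv ℝ m φ p (fun i => dir d (v i))) ^ 2))
        (fun _ _ => zero_le) (Finset.mem_range.2 (Nat.lt_succ_self k)))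
      exact Finset.single_le_sum (f := fun v : Fin k → Fin (d + 1) =>
        ∫⁻ p in S, ENNReal.ofReal ((iteratedFDeriv ℝ k φ p (fun i => dir d (v i))) ^ 2))
        (fun _ _ => zero_le) (Finset.mem_univ (Fin.tail v))
  refine main.trans ?_
  gcongr
  have h1 : (1 + T) = ENNReal.ofReal (1 + T.toReal) := by
    rw [ENNReal.ofReal_add zero_le_one ENNReal.toReal_nonneg, ENNReal.ofReal_one,
      ENNReal.ofReal_toReal hTt]
  rw [h1]
  apply ENNReal.ofReal_le_ofReal
  nlinarith [ENNReal.toReal_nonneg (a := T)]
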